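/- arXiv:0709.3120 — 2 statements merged into one kernel-verified Lean document; each statement's English description precedes it below -/
import Mathlib

section
/- Suppose Λ̃ = 0. Then the operator H, defined on the finitely supported sequences in ℓ²(ℤ, ℂ), is essentially self-adjoint; equivalently (by the standard criterion for symmetric operators), both of the sets { (H + i·id)ψ : ψ : ℤ → ℂ finitely supported } and { (H − i·id)ψ : ψ : ℤ → ℂ finitely supported } are dense subsets of ℓ²(ℤ, ℂ). -/
/-!
Conjugating by `√(B (v n))` turns `H f = w f` into the discrete Sturm–Liouville equation
`-∇(a Δφ) = w b φ` with `a n = A (v n + 2)` and `b n = B (v n)`, and `f ∈ ℓ²` into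
`∑ b |φ|² < ∞`; the diagonal of `H` matches exactly because `Λ̃ = 0`. The boundary form
`conj (φ n) * a n * Δφ n` has increments `a |Δφ|² - w b |φ|²`. If `∑ a |Δφ|²` diverged, its real
part would tend to infinity, so that `|φ|` would eventually increase, contradicting
`∑ b |φ|² < ∞ = ∑ b`. Hence the boundary form converges, and its limit is `0` because
`√(b / a)` times its modulus is at most `b |φ|² + a |Δφ|²`, while `∑ √(b / a) = ∞` (here `a`
grows at most like `n` and `b` decays no faster than `1 / n`). Summing the imaginary parts of the
increments over `ℤ` then gives `Im w * ∑ b |φ|² = 0`, so both deficiency spaces are trivial.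
-/

open Filter Topology Asymptotics ComplexConjugate

section SturmLiouville

/-- The discrete Sturm–Liouville equation `-∇(a Δφ) = w b φ`, where `Δφ n = φ (n + 1) - φ n` and
`∇` is the backward difference. It is imposed at the points `n + 1`, so that over `ℕ` the initial
point carries no condition. -/
def IsSturmLiouvilleSolution {ι : Type*} [Add ι] [One ι] (a b : ι → ℝ) (w : ℂ) (φ : ι → ℂ) :
    Prop :=
  ∀ n, (a n : ℂ) * (φ (n + 1) - φ n) - a (n + 1) * (φ (n + 1 + 1) - φ (n + 1)) =
    w * b (n + 1) * φ (n + 1)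

/-- The boundary form in the discrete Green identity for `-∇(a Δ)`. Its real part governs the
growth of `|φ|`, and its imaginary part is the current of `φ`. -/
def boundaryForm {ι : Type*} [Add ι] [One ι] (a : ι → ℝ) (φ : ι → ℂ) (n : ι) : ℂ :=
  conj (φ n) * (a n * (φ (n + 1) - φ n))

/-- A sufficient criterion for the expression `-∇(a Δ)` with weight `b` to be in the limit point
case at infinity. Since `x / 0 = 0`, points with `a k = 0` contribute nothing to the last sum. -/
structure LimitPointCriterion (a b : ℕ → ℝ) : Prop where
  eventually_nonneg : ∀ᶠ k in atTop, 0 ≤ a k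
  not_summable_weight : ¬ Summable b
  not_summable_sqrt : ¬ Summable fun k => √(b k / a k)

section General

variable {ι : Type*} [Add ι] [One ι] {a b : ι → ℝ} {w : ℂ} {φ : ι → ℂ}

theorem IsSturmLiouvilleSolution.comp {κ : Type*} [Add κ] [One κ]
    (h : IsSturmLiouvilleSolution a b w φ) {g : κ → ι} (hg : ∀ k, g (k + 1) = g k + 1) :
    IsSturmLiouvilleSolution (a ∘ g) (b ∘ g) w (φ ∘ g) := by
  intro k
  simpa only [Function.comp_apply, hg] using h (g k)

theorem IsSturmLiouvilleSolution.boundaryForm_succ_sub (h : IsSturmLiouvilleSolution a b w φ)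
    (n : ι) :
    boundaryForm a φ (n + 1) - boundaryForm a φ n =
      ((a n * ‖φ (n + 1) - φ n‖ ^ 2 : ℝ) : ℂ) - w * ((b (n + 1) * ‖φ (n + 1)‖ ^ 2 : ℝ) : ℂ) := by
  push_cast
  rw [← Complex.conj_mul', ← Complex.conj_mul', map_sub]
  unfold boundaryForm
  linear_combination -conj (φ (n + 1)) * h n

theorem norm_le_norm_succ_of_re_boundaryForm_pos {n : ι} (ha : 0 ≤ a n)
    (h : 0 < (boundaryForm a φ n).re) : ‖φ n‖ ≤ ‖φ (n + 1)‖ := by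
  have hre : (boundaryForm a φ n).re = a n * (conj (φ n) * (φ (n + 1) - φ n)).re := by
    rw [boundaryForm, mul_left_comm, Complex.re_ofReal_mul]
  have hinner : 0 < (conj (φ n) * (φ (n + 1) - φ n)).re := pos_of_mul_pos_right (hre ▸ h) ha
  have hexpand : ‖φ (n + 1)‖ ^ 2 =
      ‖φ n‖ ^ 2 + 2 * (conj (φ n) * (φ (n + 1) - φ n)).re + ‖φ (n + 1) - φ n‖ ^ 2 := by
    simp only [← Complex.normSq_eq_norm_sq, Complex.normSq_apply, Complex.mul_re, Complex.conj_re,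
      Complex.conj_im, Complex.sub_re, Complex.sub_im]
    ring
  refine (sq_le_sq₀ (norm_nonneg _) (norm_nonneg _)).1 ?_
  linarith [sq_nonneg ‖φ (n + 1) - φ n‖]

theorem sqrt_div_mul_norm_boundaryForm_le {n : ι} (ha : 0 ≤ a n) (hb : 0 ≤ b n) :
    √(b n / a n) * ‖boundaryForm a φ n‖ ≤ b n * ‖φ n‖ ^ 2 + a n * ‖φ (n + 1) - φ n‖ ^ 2 := by
  have hsqrt : √(b n / a n) * a n = √(b n) * √(a n) := by
    rw [Real.sqrt_div hb, div_mul_eq_mul_div, mul_div_assoc, Real.div_sqrt]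
  calc √(b n / a n) * ‖boundaryForm a φ n‖
      = √(b n / a n) * a n * (‖φ n‖ * ‖φ (n + 1) - φ n‖) := by
        rw [boundaryForm, norm_mul, norm_mul, RCLike.norm_conj, Complex.norm_of_nonneg ha]
        ring
    _ = √(b n) * ‖φ n‖ * (√(a n) * ‖φ (n + 1) - φ n‖) := by rw [hsqrt]; ring
    _ ≤ (√(b n) * ‖φ n‖) ^ 2 + (√(a n) * ‖φ (n + 1) - φ n‖) ^ 2 := by
        nlinarith [sq_nonneg (√(b n) * ‖φ n‖ - √(a n) * ‖φ (n + 1) - φ n‖),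
          sq_nonneg (√(b n) * ‖φ n‖), sq_nonneg (√(a n) * ‖φ (n + 1) - φ n‖)]
    _ = b n * ‖φ n‖ ^ 2 + a n * ‖φ (n + 1) - φ n‖ ^ 2 := by
        rw [mul_pow, mul_pow, Real.sq_sqrt hb, Real.sq_sqrt ha]

end General

section HalfLine

variable {a b : ℕ → ℝ} {w : ℂ} {φ : ℕ → ℂ}

theorem not_summable_of_eventually_re_boundaryForm_pos (ha : ∀ k, 0 ≤ a k) (hb : ∀ k, 0 ≤ b k)
    (hb_sum : ¬ Summable b) (hpos : ∀ᶠ k in atTop, 0 < (boundaryForm a φ k).re) :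
    ¬ Summable fun k => b k * ‖φ k‖ ^ 2 := by
  obtain ⟨m, hm⟩ := eventually_atTop.1 hpos
  have hmono : MonotoneOn (fun k => ‖φ k‖) {k | m ≤ k} :=
    monotoneOn_nat_Ici_of_le_succ fun k hk =>
      norm_le_norm_succ_of_re_boundaryForm_pos (ha k) (hm k hk)
  have hφm : 0 < ‖φ m‖ := by
    refine norm_pos_iff.2 fun h0 => (hm m le_rfl).ne' ?_
    simp [boundaryForm, h0]
  refine fun hs => hb_sum (summable_of_isBigO_nat hs (IsBigO.of_bound (‖φ m‖ ^ 2)⁻¹ ?_))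
  filter_upwards [eventually_ge_atTop m] with k hk
  rw [Real.norm_of_nonneg (hb k), Real.norm_of_nonneg (mul_nonneg (hb k) (sq_nonneg _)),
    le_inv_mul_iff₀ (by positivity), mul_comm]
  gcongr
  · exact hb k
  · exact hmono (Set.mem_ofPred.2 le_rfl) hk hk

theorem IsSturmLiouvilleSolution.summable_energy (h : IsSturmLiouvilleSolution a b w φ)
    (ha : ∀ k, 0 ≤ a k) (hb : ∀ k, 0 ≤ b k) (hb_sum : ¬ Summable b)
    (hs : Summable fun k => b k * ‖φ k‖ ^ 2) :
    Summable fun k => a k * ‖φ (k + 1) - φ k‖ ^ 2 := by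
  by_contra hdiv
  have henergy : Tendsto (fun n => ∑ k ∈ Finset.range n, a k * ‖φ (k + 1) - φ k‖ ^ 2) atTop atTop :=
    (not_summable_iff_tendsto_nat_atTop_of_nonneg
      fun k => mul_nonneg (ha k) (sq_nonneg _)).1 hdiv
  have hmass := ((summable_nat_add_iff 1).2 hs).hasSum.tendsto_sum_nat
  have hsum (n : ℕ) : (boundaryForm a φ 0).re
      - w.re * ∑ k ∈ Finset.range n, b (k + 1) * ‖φ (k + 1)‖ ^ 2
      + ∑ k ∈ Finset.range n, a k * ‖φ (k + 1) - φ k‖ ^ 2 = (boundaryForm a φ n).re := by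
    have hre := congrArg Complex.re (Finset.sum_range_sub (boundaryForm a φ) n)
    simp only [h.boundaryForm_succ_sub, Complex.re_sum, Complex.sub_re, Complex.ofReal_re,
      Complex.re_mul_ofReal, Finset.sum_sub_distrib] at hre
    rw [Finset.mul_sum]
    linear_combination hre
  have htop : Tendsto (fun n => (boundaryForm a φ n).re) atTop atTop :=
    (((hmass.const_mul w.re).const_sub _).add_atTop henergy).congr hsum
  exact not_summable_of_eventually_re_boundaryForm_pos ha hb hb_sum
    (htop.eventually_gt_atTop 0) hs

theorem IsSturmLiouvilleSolution.tendsto_boundaryForm_of_nonneg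
    (h : IsSturmLiouvilleSolution a b w φ) (ha : ∀ k, 0 ≤ a k) (hb : ∀ k, 0 ≤ b k)
    (hb_sum : ¬ Summable b) (hab_sum : ¬ Summable fun k => √(b k / a k))
    (hs : Summable fun k => b k * ‖φ k‖ ^ 2) :
    Tendsto (boundaryForm a φ) atTop (𝓝 0) := by
  have henergy := h.summable_energy ha hb hb_sum hs
  have hincr : Summable fun k => boundaryForm a φ (k + 1) - boundaryForm a φ k := by
    simp only [h.boundaryForm_succ_sub]
    exact (Complex.summable_ofReal.2 henergy).sub
      ((Complex.summable_ofReal.2 ((summable_nat_add_iff 1).2 hs)).mul_left w)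
  obtain ⟨L, hL⟩ : ∃ L, Tendsto (boundaryForm a φ) atTop (𝓝 L) :=
    cauchySeq_tendsto_of_complete <| cauchySeq_of_summable_dist <| by
      simpa only [dist_eq_norm'] using hincr.norm
  suffices hL0 : L = 0 from hL0 ▸ hL
  by_contra hL0
  have hone : (fun _ : ℕ => (1 : ℝ)) =O[atTop] boundaryForm a φ :=
    (isBigO_const_left_iff_pos_le_norm one_ne_zero).2 ⟨‖L‖ / 2, by positivity,
      hL.norm.eventually_const_le (half_lt_self (norm_pos_iff.2 hL0))⟩
  refine hab_sum (summable_of_isBigO_nat (hs.add henergy) ?_)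
  calc (fun k => √(b k / a k))
      =O[atTop] fun k => √(b k / a k) * ‖boundaryForm a φ k‖ := by
        simpa using (isBigO_refl (fun k => √(b k / a k)) atTop).mul hone.norm_right
    _ =O[atTop] fun k => b k * ‖φ k‖ ^ 2 + a k * ‖φ (k + 1) - φ k‖ ^ 2 :=
        .of_norm_le fun k => by
          rw [Real.norm_of_nonneg (by positivity)]
          exact sqrt_div_mul_norm_boundaryForm_le (ha k) (hb k)

theorem IsSturmLiouvilleSolution.tendsto_boundaryForm (h : IsSturmLiouvilleSolution a b w φ)
    (hab : LimitPointCriterion a b) (hb : ∀ k, 0 ≤ b k)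
    (hs : Summable fun k => b k * ‖φ k‖ ^ 2) :
    Tendsto (boundaryForm a φ) atTop (𝓝 0) := by
  obtain ⟨N, hN⟩ := eventually_atTop.1 hab.eventually_nonneg
  have hshift (k : ℕ) : k + 1 + N = k + N + 1 := Nat.add_right_comm k 1 N
  have htail := (h.comp hshift).tendsto_boundaryForm_of_nonneg
    (fun k => hN _ (Nat.le_add_left N k)) (fun k => hb _)
    (mt (summable_nat_add_iff N).1 hab.not_summable_weight)
    (mt (summable_nat_add_iff (f := fun k => √(b k / a k)) N).1 hab.not_summable_sqrt)
    ((summable_nat_add_iff N).2 hs)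
  refine (tendsto_add_atTop_iff_nat N).1 (htail.congr fun k => ?_)
  simp only [boundaryForm, Function.comp_apply, hshift]

theorem LimitPointCriterion.of_isBigO (ha : ∀ᶠ k in atTop, 0 < a k)
    (ha_growth : a =O[atTop] fun k : ℕ => (k : ℝ)) (hb : ∀ k, 0 ≤ b k)
    (hb_decay : (fun k : ℕ => (k : ℝ)⁻¹) =O[atTop] b) : LimitPointCriterion a b where
  eventually_nonneg := ha.mono fun _ => le_of_lt
  not_summable_weight hs := Real.not_summable_natCast_inv (summable_of_isBigO_nat hs hb_decay)
  not_summable_sqrt hs := by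
    have hratio : (fun k : ℕ => (k : ℝ)⁻¹ * (k : ℝ)⁻¹) =O[atTop] fun k => b k / a k := by
      simp only [div_eq_mul_inv]
      exact hb_decay.mul (ha_growth.inv_rev (ha.mono fun _ hk h0 => absurd h0 hk.ne'))
    have hnonneg : 0 ≤ᶠ[atTop] fun k => b k / a k := ha.mono fun k hk => div_nonneg (hb k) hk.le
    refine Real.not_summable_natCast_inv (summable_of_isBigO_nat hs ?_)
    simpa using hratio.sqrt hnonneg

end HalfLine

section Line

variable {a b : ℤ → ℝ} {w : ℂ} {φ : ℤ → ℂ}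

theorem IsSturmLiouvilleSolution.tendsto_boundaryForm_int (h : IsSturmLiouvilleSolution a b w φ)
    (hab : LimitPointCriterion (fun k => a k) (fun k => b k)) (hb : ∀ n, 0 ≤ b n)
    (hs : Summable fun n => b n * ‖φ n‖ ^ 2) :
    Tendsto (boundaryForm a φ) atTop (𝓝 0) := by
  rw [← Nat.map_cast_int_atTop, tendsto_map'_iff]
  refine ((h.comp Nat.cast_succ).tendsto_boundaryForm hab (fun k => hb k)
    (hs.comp_injective Nat.cast_injective)).congr fun k => ?_
  simp [boundaryForm]

theorem IsSturmLiouvilleSolution.reflect (h : IsSturmLiouvilleSolution a b w φ) :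
    IsSturmLiouvilleSolution (fun n => a (-n - 1)) (fun n => b (-n)) w (fun n => φ (-n)) := by
  intro n
  have hn := h (-(n + 1) - 1)
  simp only [sub_add_cancel] at hn
  have hpred : -(n + 1 + 1) = -(n + 1) - 1 := by ring
  have hsucc : -(n + 1) + 1 = -n := by ring
  have hself : -n - 1 = -(n + 1) := by ring
  rw [hsucc] at hn
  simp only [hpred, hself]
  linear_combination hn

theorem boundaryForm_reflect_im (n : ℤ) :
    (boundaryForm (fun n => a (-n - 1)) (fun n => φ (-n)) (-n - 1)).im =
      -(boundaryForm a φ n).im := by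
  have hleft : -(-n - 1) = n + 1 := by ring
  have hright : -(-n - 1 + 1) = n := by ring
  simp only [boundaryForm, hleft, hright, add_sub_cancel_right, Complex.mul_im, Complex.mul_re,
    Complex.conj_re, Complex.conj_im, Complex.ofReal_re, Complex.ofReal_im, Complex.sub_re,
    Complex.sub_im]
  ring

theorem IsSturmLiouvilleSolution.eq_zero (h : IsSturmLiouvilleSolution a b w φ) (hw : w.im ≠ 0)
    (hb : ∀ n, 0 < b n) (hright : LimitPointCriterion (fun k => a k) (fun k => b k))
    (hleft : LimitPointCriterion (fun k => a (-k - 1)) (fun k => b (-k)))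
    (hs : Summable fun n => b n * ‖φ n‖ ^ 2) : φ = 0 := by
  have hatTop : Tendsto (fun n => (boundaryForm a φ n).im) atTop (𝓝 0) :=
    (Complex.continuous_im.tendsto 0).comp
      (h.tendsto_boundaryForm_int hright (fun n => (hb n).le) hs)
  have hatBot : Tendsto (fun n => (boundaryForm a φ n).im) atBot (𝓝 0) := by
    have hreflect := h.reflect.tendsto_boundaryForm_int hleft (fun n => (hb _).le)
      (hs.comp_injective neg_injective)
    have hneg : Tendsto (fun n : ℤ => -n - 1) atBot atTop :=
      tendsto_neg_atBot_atTop.atTop_add tendsto_const_nhds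
    simpa [boundaryForm_reflect_im] using
      ((Complex.continuous_im.tendsto 0).comp (hreflect.comp hneg)).neg
  have hstep (n : ℤ) : (boundaryForm a φ (n + 1)).im =
      (boundaryForm a φ n).im - w.im * (b (n + 1) * ‖φ (n + 1)‖ ^ 2) := by
    have him := congrArg Complex.im (h.boundaryForm_succ_sub n)
    simp only [Complex.sub_im, Complex.ofReal_im, Complex.im_mul_ofReal] at him
    linear_combination him
  have hanti : Antitone fun n => (boundaryForm a φ n).im / w.im := by
    refine antitone_int_of_succ_le fun n => ?_
    rw [hstep, sub_div, mul_div_cancel_left₀ _ hw]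
    exact sub_le_self _ (mul_nonneg (hb _).le (sq_nonneg _))
  have hzero (n : ℤ) : (boundaryForm a φ n).im = 0 := by
    refine (div_eq_zero_iff.1 (le_antisymm ?_ ?_)).resolve_right hw
    · exact hanti.ge_of_tendsto (by simpa using hatBot.div_const w.im) n
    · exact hanti.le_of_tendsto (by simpa using hatTop.div_const w.im) n
  funext n
  have hn := hstep (n - 1)
  rw [hzero, hzero, sub_add_cancel] at hn
  simpa [hw, (hb n).ne'] using hn

end Line

end SturmLiouville

section Jacobi

/-- The Jacobi operator on sequences over `ℤ` with off-diagonal entries `-c` and diagonal `d`. -/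
def jacobiOperator (c d : ℤ → ℝ) : (ℤ → ℂ) →ₗ[ℂ] (ℤ → ℂ) where
  toFun ψ n := -(c (n - 1) : ℂ) * ψ (n - 1) - (c n : ℂ) * ψ (n + 1) + (d n : ℂ) * ψ n
  map_add' ψ χ := by ext n; simp only [Pi.add_apply]; ring
  map_smul' t ψ := by ext n; simp only [Pi.smul_apply, smul_eq_mul, RingHom.id_apply]; ring

/-- The range of `H + z` on the finitely supported sequences, as a subspace of `ℓ²(ℤ)`, for the
Jacobi operator `H` with coefficients `c` and `d`. -/
def jacobiRange (c d : ℤ → ℝ) (z : ℂ) : Submodule ℂ (lp (fun _ : ℤ => ℂ) 2) where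
  carrier := {f | ∃ ψ : ℤ → ℂ, (Function.support ψ).Finite ∧
    (f : ℤ → ℂ) = jacobiOperator c d ψ + z • ψ}
  zero_mem' := ⟨0, by simp, by rw [map_zero, smul_zero, add_zero, lp.coeFn_zero]⟩
  add_mem' := by
    rintro f g ⟨ψ, hψ, hf⟩ ⟨χ, hχ, hg⟩
    refine ⟨ψ + χ, (hψ.union hχ).subset (Function.support_add ψ χ), ?_⟩
    rw [lp.coeFn_add, hf, hg, map_add, smul_add, add_add_add_comm]
  smul_mem' := by
    rintro t f ⟨ψ, hψ, hf⟩
    refine ⟨t • ψ, hψ.subset (Function.support_const_smul_subset t ψ), ?_⟩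
    rw [lp.coeFn_smul, hf, map_smul, smul_add, smul_comm t z]

variable {a b c d : ℤ → ℝ} {w z : ℂ}

theorem jacobiOperator_apply (ψ : ℤ → ℂ) (n : ℤ) :
    jacobiOperator c d ψ n =
      -(c (n - 1) : ℂ) * ψ (n - 1) - (c n : ℂ) * ψ (n + 1) + (d n : ℂ) * ψ n :=
  rfl

theorem jacobiOperator_single (n : ℤ) :
    jacobiOperator c d (Pi.single n 1) =
      Pi.single (n - 1) (-(c (n - 1) : ℂ)) + Pi.single (n + 1) (-(c n : ℂ))
        + Pi.single n (d n : ℂ) := by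
  funext m
  simp only [jacobiOperator_apply, Pi.add_apply, Pi.single_apply]
  rcases lt_trichotomy m n with hm | rfl | hm <;> grind

theorem dense_jacobiRange
    (hz : ∀ f : lp (fun _ : ℤ => ℂ) 2, jacobiOperator c d f = -conj z • (f : ℤ → ℂ) → f = 0) :
    Dense (jacobiRange c d z : Set (lp (fun _ : ℤ => ℂ) 2)) := by
  rw [Submodule.dense_iff_topologicalClosure_eq_top, Submodule.topologicalClosure_eq_top_iff,
    Submodule.eq_bot_iff]
  refine fun f hf => hz f (funext fun n => ?_)
  have hmem : lp.single 2 (n - 1) (-(c (n - 1) : ℂ)) + lp.single 2 (n + 1) (-(c n : ℂ))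
      + lp.single 2 n (d n : ℂ) + lp.single 2 n z ∈ jacobiRange c d z := by
    refine ⟨Pi.single n 1, (Set.finite_singleton n).subset Pi.support_single_subset, ?_⟩
    rw [jacobiOperator_single, ← Pi.single_smul]
    simp only [lp.coeFn_add, lp.coeFn_single, smul_eq_mul, mul_one]
  have horth := (Submodule.mem_orthogonal _ f).1 hf _ hmem
  simp only [inner_add_left, lp.inner_single_left, RCLike.inner_apply, map_neg,
    Complex.conj_ofReal] at horth
  simp only [jacobiOperator_apply, Pi.smul_apply, smul_eq_mul]
  linear_combination horth

theorem isSturmLiouvilleSolution_of_jacobiOperator_eq (hb : ∀ n, 0 < b n)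
    (hc : ∀ n, c n = a n / √(b n * b (n + 1))) (hd : ∀ n, d n = (a n + a (n - 1)) / b n)
    {f : ℤ → ℂ} (hf : jacobiOperator c d f = w • f) :
    IsSturmLiouvilleSolution a b w fun n => f n / (√(b n) : ℂ) := by
  intro n
  have hsqrt_ne (m : ℤ) : (√(b m) : ℂ) ≠ 0 := by exact_mod_cast (Real.sqrt_pos.2 (hb m)).ne'
  have hsqrt_sq (m : ℤ) : (b m : ℂ) = (√(b m) : ℂ) ^ 2 := by
    exact_mod_cast (Real.sq_sqrt (hb m).le).symm
  have hn := congrFun hf (n + 1)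
  simp only [jacobiOperator_apply, Pi.smul_apply, smul_eq_mul,
    add_sub_cancel_right, hc, hd, Real.sqrt_mul (hb _).le] at hn
  push_cast at hn
  rw [hsqrt_sq (n + 1)] at hn ⊢
  have h0 := hsqrt_ne n
  have h1 := hsqrt_ne (n + 1)
  have h2 := hsqrt_ne (n + 1 + 1)
  field_simp at hn ⊢
  linear_combination hn

theorem dense_jacobiRange_of_limitPointCriterion (hb : ∀ n, 0 < b n)
    (hc : ∀ n, c n = a n / √(b n * b (n + 1))) (hd : ∀ n, d n = (a n + a (n - 1)) / b n)
    (hright : LimitPointCriterion (fun k => a k) (fun k => b k))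
    (hleft : LimitPointCriterion (fun k => a (-k - 1)) (fun k => b (-k))) (hz : z.im ≠ 0) :
    Dense (jacobiRange c d z : Set (lp (fun _ : ℤ => ℂ) 2)) := by
  refine dense_jacobiRange fun f hf => ?_
  have hsummable : Summable fun n => b n * ‖f n / (√(b n) : ℂ)‖ ^ 2 := by
    have hf_sq : Summable fun n => ‖f n‖ ^ 2 := by
      simpa using (lp.memℓp f).summable (by norm_num)
    refine hf_sq.congr fun n => ?_
    rw [norm_div, Complex.norm_of_nonneg (Real.sqrt_nonneg _), div_pow, Real.sq_sqrt (hb n).le,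
      mul_div_cancel₀ _ (hb n).ne']
  have hzero := (isSturmLiouvilleSolution_of_jacobiOperator_eq hb hc hd hf).eq_zero
    (by simpa using hz) hb hright hleft hsummable
  ext n
  simpa [(Real.sqrt_pos.2 (hb n)).ne'] using congrFun hzero n

end Jacobi

section Asymptotics

open Bornology

variable {A B : ℝ → ℝ} {m : ℝ}

theorem isTheta_natCast_affine (hm : m ≠ 0) (p : ℝ) :
    (fun k : ℕ => m * k + p) =Θ[atTop] fun k : ℕ => (k : ℝ) :=
  ((isTheta_refl _ _).const_mul_left hm).add_isLittleO
    (isLittleO_const_left.2 (.inr (tendsto_norm_atTop_atTop.comp tendsto_natCast_atTop_atTop)))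

theorem tendsto_natCast_affine_cobounded (hm : m ≠ 0) (p : ℝ) :
    Tendsto (fun k : ℕ => m * k + p) atTop (cobounded ℝ) :=
  tendsto_norm_atTop_iff_cobounded.1 <| (isTheta_natCast_affine hm p).tendsto_norm_atTop_iff.2
    (tendsto_norm_atTop_atTop.comp tendsto_natCast_atTop_atTop)

theorem limitPointCriterion_comp_affine (hm : m ≠ 0) (p q : ℝ) (hA : ∀ᶠ v in cobounded ℝ, 0 < A v)
    (hA_growth : A =O[cobounded ℝ] id) (hB : ∀ k : ℕ, 0 ≤ B (m * k + q))
    (hB_decay : (fun v => v⁻¹) =O[cobounded ℝ] B) :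
    LimitPointCriterion (fun k => A (m * k + p)) (fun k => B (m * k + q)) :=
  .of_isBigO ((tendsto_natCast_affine_cobounded hm p).eventually hA)
    ((hA_growth.comp_tendsto (tendsto_natCast_affine_cobounded hm p)).trans
      (isTheta_natCast_affine hm p).isBigO) hB
    ((isTheta_natCast_affine hm q).inv.isBigO_symm.trans
      (hB_decay.comp_tendsto (tendsto_natCast_affine_cobounded hm q)))

theorem tendsto_abs_mul_of_abs_sub_le {α C₀ : ℝ}
    (hB : ∀ᶠ v in cobounded ℝ, |(|v| * B v - 1 - α / v ^ 2)| ≤ C₀ / v ^ 4) :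
    Tendsto (fun v => |v| * B v) (cobounded ℝ) (𝓝 1) := by
  have hdiv (t : ℝ) {j : ℕ} (hj : j ≠ 0) :
      Tendsto (fun v : ℝ => t / v ^ j) (cobounded ℝ) (𝓝 0) := by
    simpa [div_eq_mul_inv, hj] using (tendsto_inv₀_cobounded.pow j).const_mul t
  have herror : Tendsto (fun v => |v| * B v - 1 - α / v ^ 2) (cobounded ℝ) (𝓝 0) :=
    squeeze_zero_norm' hB (hdiv C₀ four_ne_zero)
  have hsum := (herror.add (hdiv α two_ne_zero)).add_const 1
  rw [zero_add, zero_add] at hsum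
  exact hsum.congr fun v => by ring

theorem inv_isBigO_of_tendsto_abs_mul {L : ℝ} (hL : L ≠ 0)
    (hB : Tendsto (fun v => |v| * B v) (cobounded ℝ) (𝓝 L)) :
    (fun v => v⁻¹) =O[cobounded ℝ] B := by
  have hone : (fun _ : ℝ => (1 : ℝ)) =O[cobounded ℝ] fun v => |v| * B v :=
    (isBigO_const_left_iff_pos_le_norm one_ne_zero).2 ⟨|L| / 2, by positivity,
      hB.norm.eventually_const_le (half_lt_self (abs_pos.2 hL))⟩
  calc (fun v => v⁻¹) = fun v => v⁻¹ * 1 := by simp only [mul_one]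
    _ =O[cobounded ℝ] fun v => v⁻¹ * (|v| * B v) := (isBigO_refl _ _).mul hone
    _ =O[cobounded ℝ] B := by
      refine .of_bound 1 ?_
      filter_upwards [eventually_ne_cobounded (0 : ℝ)] with v hv
      simp [hv]

end Asymptotics

theorem aps_essentially_selfAdjoint_of_zero_cosmological_constant_general
    {ε : ℝ} {A B : ℝ → ℝ}
    (hA_pos : ∀ᶠ v in Bornology.cobounded ℝ, 0 < A v)
    (hA_growth : A =O[Bornology.cobounded ℝ] id)
    (hB_decay : (fun v => v⁻¹) =O[Bornology.cobounded ℝ] B)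
    (hB_pos : ∀ n : ℤ, 0 < B (4 * (n : ℝ) + ε))
    {c d : ℤ → ℝ}
    (hc : ∀ n : ℤ, c n = A (4 * (n : ℝ) + ε + 2) /
      √(B (4 * (n : ℝ) + ε) * B (4 * ((n : ℝ) + 1) + ε)))
    (hd : ∀ n : ℤ, d n = (A (4 * (n : ℝ) + ε + 2) + A (4 * (n : ℝ) + ε - 2)) /
      B (4 * (n : ℝ) + ε))
    {H : (ℤ → ℂ) → (ℤ → ℂ)}
    (hH : ∀ (ψ : ℤ → ℂ) (n : ℤ),
      H ψ n = -(c (n - 1) : ℂ) * ψ (n - 1) - (c n : ℂ) * ψ (n + 1) + (d n : ℂ) * ψ n)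
    {z : ℂ} (hz : z.im ≠ 0) :
    Dense {f : lp (fun _ : ℤ => ℂ) 2 |
      ∃ ψ : ℤ → ℂ, (Function.support ψ).Finite ∧ ∀ n : ℤ, f n = H ψ n + z * ψ n} := by
  have hright : LimitPointCriterion (fun k => A (4 * ((k : ℤ) : ℝ) + ε + 2))
      (fun k => B (4 * ((k : ℤ) : ℝ) + ε)) := by
    simpa [add_assoc] using limitPointCriterion_comp_affine four_ne_zero (ε + 2) ε hA_pos hA_growth
      (fun k => by exact_mod_cast (hB_pos k).le) hB_decay
  have hleft : LimitPointCriterion (fun k => A (4 * ((-k - 1 : ℤ) : ℝ) + ε + 2))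
      (fun k => B (4 * ((-k : ℤ) : ℝ) + ε)) := by
    convert limitPointCriterion_comp_affine (neg_ne_zero.2 four_ne_zero) (ε - 2) ε hA_pos hA_growth
      (fun k => by simpa using (hB_pos (-k)).le) hB_decay using 3 <;> push_cast <;> ring
  obtain rfl : H = jacobiOperator c d := funext fun ψ => funext (hH ψ)
  have hpred (n : ℤ) : 4 * (n : ℝ) + ε - 2 = 4 * ((n - 1 : ℤ) : ℝ) + ε + 2 := by push_cast; ring
  have hrange := dense_jacobiRange_of_limitPointCriterion
    (a := fun n => A (4 * (n : ℝ) + ε + 2)) (b := fun n => B (4 * (n : ℝ) + ε)) (c := c) (d := d)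
    hB_pos
    (fun n => by rw [hc]; push_cast; rfl)
    (fun n => by rw [hd, hpred]) hright hleft hz
  refine hrange.mono ?_
  rintro f ⟨ψ, hψ, hf⟩
  exact ⟨ψ, hψ, congrFun hf⟩

/-- STATEMENT 0: If Λ̃ = 0, the APS operator H, defined on the finitely supported
sequences in ℓ²(ℤ, ℂ), is essentially self-adjoint, i.e. the ranges of H ± i·id on
finitely supported sequences are dense in ℓ²(ℤ, ℂ). -/
theorem aps_essentially_selfAdjoint_of_zero_cosmological_constant
    (G ε α Λ : ℝ) (hG : 0 < G) (hε : ε ∈ Set.Ioo (0 : ℝ) 4) (hΛ : Λ = 0)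
    (A B : ℝ → ℝ)
    (hA : ∃ R > (0 : ℝ), ∀ v : ℝ, R ≤ |v| → A v = 3 * Real.pi * G / 4 * |v|)
    (hB : ∃ C₀ > (0 : ℝ), ∃ M₀ > (0 : ℝ), ∀ v : ℝ, M₀ ≤ |v| →
      abs (|v| * B v - 1 - α / v ^ 2) ≤ C₀ / v ^ 4)
    (hBpos : ∀ n : ℤ, 0 < B (4 * (n : ℝ) + ε))
    (c d : ℤ → ℝ)
    (hc : ∀ n : ℤ, c n = A (4 * (n : ℝ) + ε + 2) /
      Real.sqrt (B (4 * (n : ℝ) + ε) * B (4 * ((n : ℝ) + 1) + ε)))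
    (hd : ∀ n : ℤ, d n = (A (4 * (n : ℝ) + ε + 2) + A (4 * (n : ℝ) + ε - 2)
      + Λ * |4 * (n : ℝ) + ε|) / B (4 * (n : ℝ) + ε))
    (H : (ℤ → ℂ) → (ℤ → ℂ))
    (hH : ∀ (ψ : ℤ → ℂ) (n : ℤ),
      H ψ n = -(c (n - 1) : ℂ) * ψ (n - 1) - (c n : ℂ) * ψ (n + 1) + (d n : ℂ) * ψ n) :
    Dense {f : lp (fun _ : ℤ => ℂ) 2 |
      ∃ ψ : ℤ → ℂ, (Function.support ψ).Finite ∧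
        ∀ n : ℤ, f n = H ψ n + Complex.I * ψ n} ∧
    Dense {f : lp (fun _ : ℤ => ℂ) 2 |
      ∃ ψ : ℤ → ℂ, (Function.support ψ).Finite ∧
        ∀ n : ℤ, f n = H ψ n - Complex.I * ψ n} := by
  obtain ⟨R, -, hA⟩ := hA
  obtain ⟨C₀, -, M₀, -, hB⟩ := hB
  have hA_eq : A =ᶠ[Bornology.cobounded ℝ] fun v => 3 * Real.pi * G / 4 * |v| :=
    (eventually_cobounded_le_norm R).mono hA
  have hA_pos : ∀ᶠ v in Bornology.cobounded ℝ, 0 < A v := by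
    filter_upwards [hA_eq, Bornology.eventually_ne_cobounded 0] with v hv hv0
    rw [hv]
    positivity
  have hA_growth : A =O[Bornology.cobounded ℝ] id :=
    hA_eq.trans_isBigO ((isBigO_refl id _).abs_left.const_mul_left _)
  have hB_decay : (fun v => v⁻¹) =O[Bornology.cobounded ℝ] B :=
    inv_isBigO_of_tendsto_abs_mul one_ne_zero
      (tendsto_abs_mul_of_abs_sub_le ((eventually_cobounded_le_norm M₀).mono hB))
  have hdense {z : ℂ} (hz : z.im ≠ 0) :=
    aps_essentially_selfAdjoint_of_zero_cosmological_constant_general hA_pos hA_growth hB_decay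
      hBpos hc (by simpa [hΛ] using hd) hH hz
  exact ⟨hdense (z := Complex.I) (by simp),
    by simpa [sub_eq_add_neg] using hdense (z := -Complex.I) (by simp)⟩
end

section
/- There exist constants C > 0 and M > 0 such that for every real v with |v| ≥ M one has | Ã(v)/√(B̃(v+2)·B̃(v−2)) − (3πG/4)·(v² − 2 − α) | ≤ C/v². (In particular B̃(v+2)·B̃(v−2) > 0 for such v, so the left-hand side is well defined.) -/
/-!
Put `u v = |v| * B v = 1 + α / v² + O(v⁻⁴)`. For `|v|` large,
`v² * (B (v + h) * B (v - h)) = u (v + h) * u (v - h) * (1 - h² / v²)⁻¹`. Quantities of the form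
`1 + O(v⁻²)` can be multiplied and raised to real powers at first order, up to `O(v⁻⁴)`, and in the
product of the two shifted factors the terms of odd order in `v⁻¹` cancel, so the right-hand side is
`1 + (2 * α + h²) / v² + O(v⁻⁴)`. Its power `-1 / 2`, multiplied by `v²`, is
`|v| / √(B (v + h) * B (v - h))`.
-/

open Asymptotics Bornology Filter Topology

section Cobounded

theorem eventually_cobounded_iff_norm {E : Type*} [SeminormedAddGroup E] {p : E → Prop} :
    (∀ᶠ x in cobounded E, p x) ↔ ∃ M > (0 : ℝ), ∀ x, M ≤ ‖x‖ → p x := by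
  refine hasBasis_cobounded_norm.eventually_iff.trans ⟨?_, ?_⟩
  · rintro ⟨M, -, h⟩
    exact ⟨max M 1, by positivity, fun x hx => h (le_of_max_le_left hx)⟩
  · rintro ⟨M, -, h⟩
    exact ⟨M, trivial, h⟩

theorem isBigO_cobounded_inv_pow_iff {f : ℝ → ℝ} {n : ℕ} (hn : Even n) :
    f =O[cobounded ℝ] (fun v => (v ^ n)⁻¹) ↔
      ∃ C > (0 : ℝ), ∃ M > (0 : ℝ), ∀ v, M ≤ |v| → |f v| ≤ C / v ^ n := by
  simp only [isBigO_iff', eventually_cobounded_iff_norm, Real.norm_eq_abs, abs_inv, abs_pow,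
    hn.pow_abs, div_eq_mul_inv]

variable {𝕜 : Type*} [NormedField 𝕜]

theorem tendsto_inv_sq_cobounded : Tendsto (fun v : 𝕜 => (v ^ 2)⁻¹) (cobounded 𝕜) (𝓝 0) := by
  simpa using (tendsto_inv₀_cobounded (α := 𝕜)).pow 2

theorem isBigO_inv_add_const (h : 𝕜) :
    (fun v : 𝕜 => (v + h)⁻¹) =O[cobounded 𝕜] fun v => v⁻¹ := by
  have hid : (fun v : 𝕜 => v) =O[cobounded 𝕜] fun v => v + h :=
    (isLittleO_const_id_cobounded h).right_isBigO_add'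
  exact hid.inv_rev ((eventually_ne_cobounded 0).mono fun v hv h0 => absurd h0 hv)

/-- The terms of order `v⁻³` of the two shifts cancel. -/
theorem isBigO_inv_sq_shift_add_inv_sq_shift (h : 𝕜) :
    (fun v : 𝕜 => ((v + h) ^ 2)⁻¹ + ((v - h) ^ 2)⁻¹ - 2 * (v ^ 2)⁻¹)
      =O[cobounded 𝕜] fun v => (v ^ 4)⁻¹ := by
  have hplus := isBigO_inv_add_const h
  have hminus : (fun v : 𝕜 => (v - h)⁻¹) =O[cobounded 𝕜] fun v => v⁻¹ := by
    simpa only [sub_eq_add_neg] using isBigO_inv_add_const (-h)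
  have hinv := isBigO_refl (fun v : 𝕜 => v⁻¹) (cobounded 𝕜)
  refine ((((hinv.mul hplus).mul hminus).mul ((hplus.add hminus).add hinv)).const_mul_left
    (2 * h ^ 2)).congr' ?_ (.of_forall fun v => by ring)
  have hplus_ne : ∀ᶠ v in cobounded 𝕜, v + h ≠ 0 :=
    (tendsto_add_const_cobounded h).eventually (eventually_ne_cobounded 0)
  have hminus_ne : ∀ᶠ v in cobounded 𝕜, v - h ≠ 0 :=
    (tendsto_sub_const_cobounded h).eventually (eventually_ne_cobounded 0)
  filter_upwards [eventually_ne_cobounded 0, hplus_ne, hminus_ne] with v _ _ _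
  field_simp
  ring

end Cobounded

theorem isBigO_one_add_rpow_sub_linear (s : ℝ) :
    (fun t : ℝ => (1 + t) ^ s - 1 - s * t) =O[𝓝 0] fun t => t ^ 2 := by
  simpa [FormalMultilinearSeries.partialSum, Finset.sum_range_succ, binomialSeries_apply,
    sub_sub, mul_comm, -FormalMultilinearSeries.apply_eq_prod_smul_coeff] using
    Real.one_add_rpow_hasFPowerSeriesAt_zero (a := s).isBigO_sub_partialSum_pow 2

/-- The first-order expansion `f = 1 + φ + O(ε²)` along `l`, with first-order term `φ = O(ε)`; it
serves to multiply such functions and to raise them to real powers. That the scale `ε` tends to `0`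
is not part of the definition. -/
structure HasUnitExpansion {ι : Type*} (l : Filter ι) (ε f φ : ι → ℝ) : Prop where
  linear : φ =O[l] ε
  remainder : (fun x => f x - 1 - φ x) =O[l] fun x => ε x ^ 2

namespace HasUnitExpansion

variable {ι κ : Type*} {l : Filter ι} {ε f g φ ψ : ι → ℝ}

theorem congr (hf : HasUnitExpansion l ε f φ) (hfg : f =ᶠ[l] g) : HasUnitExpansion l ε g φ where
  linear := hf.linear
  remainder := hf.remainder.congr' (hfg.mono fun x hx => by simp only [hx]) .rfl

theorem congr_linear (hf : HasUnitExpansion l ε f φ) (hψ : ψ =O[l] ε)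
    (hφψ : (fun x => φ x - ψ x) =O[l] fun x => ε x ^ 2) : HasUnitExpansion l ε f ψ where
  linear := hψ
  remainder := (hf.remainder.add hφψ).congr_left fun x => by ring

theorem comp {l' : Filter κ} {ε' : κ → ℝ} {k : κ → ι} (hf : HasUnitExpansion l ε f φ)
    (hk : Tendsto k l' l) (hε : (ε ∘ k) =O[l'] ε') : HasUnitExpansion l' ε' (f ∘ k) (φ ∘ k) where
  linear := (hf.linear.comp_tendsto hk).trans hε
  remainder := (hf.remainder.comp_tendsto hk).trans (hε.pow 2)

theorem isBigO_sub_one (hf : HasUnitExpansion l ε f φ) (hε : Tendsto ε l (𝓝 0)) :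
    (fun x => f x - 1) =O[l] ε := by
  have hsq : (fun x => ε x ^ 2) =O[l] ε := by
    simpa [sq] using (hε.isBigO_one ℝ).mul (isBigO_refl ε l)
  exact ((hf.remainder.trans hsq).add hf.linear).congr_left fun x => by ring

theorem tendsto_one (hf : HasUnitExpansion l ε f φ) (hε : Tendsto ε l (𝓝 0)) :
    Tendsto f l (𝓝 1) :=
  tendsto_sub_nhds_zero_iff.1 ((hf.isBigO_sub_one hε).trans_tendsto hε)

theorem mul (hf : HasUnitExpansion l ε f φ) (hg : HasUnitExpansion l ε g ψ)
    (hε : Tendsto ε l (𝓝 0)) : HasUnitExpansion l ε (f * g) (φ + ψ) where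
  linear := hf.linear.add hg.linear
  remainder := by
    have hcross : (fun x => (f x - 1) * (g x - 1)) =O[l] fun x => ε x ^ 2 := by
      simpa only [sq] using (hf.isBigO_sub_one hε).mul (hg.isBigO_sub_one hε)
    refine ((hf.remainder.add hg.remainder).add hcross).congr_left fun x => ?_
    simp only [Pi.mul_apply, Pi.add_apply]
    ring

theorem rpow (hf : HasUnitExpansion l ε f φ) (hε : Tendsto ε l (𝓝 0)) (s : ℝ) :
    HasUnitExpansion l ε (fun x => f x ^ s) (fun x => s * φ x) where
  linear := hf.linear.const_mul_left s
  remainder := by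
    have hsub := hf.isBigO_sub_one hε
    have htaylor : (fun x => f x ^ s - 1 - s * (f x - 1)) =O[l] fun x => ε x ^ 2 := by
      simpa [Function.comp_def] using ((isBigO_one_add_rpow_sub_linear s).comp_tendsto
        (hsub.trans_tendsto hε)).trans (hsub.pow 2)
    exact (htaylor.add (hf.remainder.const_mul_left s)).congr_left fun x => by ring

end HasUnitExpansion

section InverseSquareScale

variable {u B : ℝ → ℝ} {α : ℝ}

theorem hasUnitExpansion_inv_sq_iff :
    HasUnitExpansion (cobounded ℝ) (fun v => (v ^ 2)⁻¹) u (fun v => α / v ^ 2) ↔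
      (fun v => u v - 1 - α / v ^ 2) =O[cobounded ℝ] fun v => (v ^ 4)⁻¹ := by
  have hsq (v : ℝ) : (v ^ 2)⁻¹ ^ 2 = (v ^ 4)⁻¹ := by ring
  refine ⟨fun hu => by simpa only [hsq] using hu.remainder, fun hu => ⟨?_, by simpa only [hsq]⟩⟩
  exact (isBigO_refl _ _).const_mul_left α

theorem HasUnitExpansion.comp_add_const
    (hu : HasUnitExpansion (cobounded ℝ) (fun v => (v ^ 2)⁻¹) u (fun v => α / v ^ 2)) (h : ℝ) :
    HasUnitExpansion (cobounded ℝ) (fun v => (v ^ 2)⁻¹)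
      (fun v => u (v + h)) (fun v => α / (v + h) ^ 2) :=
  hu.comp (tendsto_add_const_cobounded h) <| by
    simpa [Function.comp_def] using (isBigO_inv_add_const h).pow 2

theorem HasUnitExpansion.mul_shift
    (hu : HasUnitExpansion (cobounded ℝ) (fun v => (v ^ 2)⁻¹) u (fun v => α / v ^ 2)) (h : ℝ) :
    HasUnitExpansion (cobounded ℝ) (fun v => (v ^ 2)⁻¹)
      (fun v => u (v + h) * u (v - h)) (fun v => 2 * α / v ^ 2) := by
  have hprod := (hu.comp_add_const h).mul (hu.comp_add_const (-h)) tendsto_inv_sq_cobounded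
  refine hprod.congr_linear ((isBigO_refl _ _).const_mul_left _) ?_
  refine ((isBigO_inv_sq_shift_add_inv_sq_shift h).const_mul_left α).congr (fun v => ?_)
    fun v => by ring
  simp only [Pi.add_apply, ← sub_eq_add_neg]
  ring

theorem hasUnitExpansion_one_sub (h : ℝ) :
    HasUnitExpansion (cobounded ℝ) (fun v => (v ^ 2)⁻¹)
      (fun v => 1 - h ^ 2 / v ^ 2) (fun v => -h ^ 2 / v ^ 2) :=
  hasUnitExpansion_inv_sq_iff.2 <| (isBigO_zero _ _).congr_left fun v => by ring

theorem hasUnitExpansion_sq_mul_mul_shift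
    (hB : HasUnitExpansion (cobounded ℝ) (fun v => (v ^ 2)⁻¹)
      (fun v => |v| * B v) (fun v => α / v ^ 2)) (h : ℝ) :
    HasUnitExpansion (cobounded ℝ) (fun v => (v ^ 2)⁻¹)
      (fun v => v ^ 2 * (B (v + h) * B (v - h))) (fun v => (2 * α + h ^ 2) / v ^ 2) := by
  have hε := tendsto_inv_sq_cobounded (𝕜 := ℝ)
  have hquot := (hB.mul_shift h).mul ((hasUnitExpansion_one_sub h).rpow hε (-1)) hε
  have hlinear : (fun v : ℝ => 2 * α / v ^ 2) + (fun v => -1 * (-h ^ 2 / v ^ 2)) =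
      fun v => (2 * α + h ^ 2) / v ^ 2 := by
    funext v
    simp only [Pi.add_apply]
    ring
  rw [hlinear] at hquot
  refine hquot.congr (eventually_cobounded_iff_norm.2 ⟨|h| + 1, by positivity, fun v hv => ?_⟩)
  have hsq : h ^ 2 < v ^ 2 := sq_lt_sq.2 (by rw [Real.norm_eq_abs] at hv; linarith)
  have hv0 : v ^ 2 ≠ 0 := ((sq_nonneg h).trans_lt hsq).ne'
  have habs : |v + h| * |v - h| = v ^ 2 - h ^ 2 := by
    rw [← abs_mul, ← sq_sub_sq, abs_of_pos (sub_pos.2 hsq)]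
  have hne : v ^ 2 - h ^ 2 ≠ 0 := (sub_pos.2 hsq).ne'
  calc |v + h| * B (v + h) * (|v - h| * B (v - h)) * (1 - h ^ 2 / v ^ 2) ^ (-1 : ℝ)
      = (|v + h| * |v - h|) * (B (v + h) * B (v - h)) * (1 - h ^ 2 / v ^ 2)⁻¹ := by
        rw [Real.rpow_neg_one]; ring
    _ = v ^ 2 * (B (v + h) * B (v - h)) := by
        rw [habs, one_sub_div hv0]; field_simp

theorem eventually_mul_shift_pos
    (hB : HasUnitExpansion (cobounded ℝ) (fun v => (v ^ 2)⁻¹)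
      (fun v => |v| * B v) (fun v => α / v ^ 2)) (h : ℝ) :
    ∀ᶠ v in cobounded ℝ, 0 < B (v + h) * B (v - h) := by
  have hlim := (hasUnitExpansion_sq_mul_mul_shift hB h).tendsto_one tendsto_inv_sq_cobounded
  exact (hlim.eventually_const_lt one_pos).mono fun v hv => pos_of_mul_pos_right hv (sq_nonneg v)

theorem abs_div_sqrt_eq_sq_mul_rpow {v : ℝ} (hv : v ≠ 0) (p : ℝ) :
    |v| / √p = v ^ 2 * (v ^ 2 * p) ^ (-1 / 2 : ℝ) := by
  rw [neg_div, Real.rpow_neg_eq_inv_rpow, ← Real.sqrt_eq_rpow, Real.sqrt_inv,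
    Real.sqrt_mul (sq_nonneg v), Real.sqrt_sq_eq_abs, ← sq_abs v]
  field_simp

theorem isBigO_abs_div_sqrt_mul_shift_sub
    (hB : HasUnitExpansion (cobounded ℝ) (fun v => (v ^ 2)⁻¹)
      (fun v => |v| * B v) (fun v => α / v ^ 2)) (h : ℝ) :
    (fun v => |v| / √(B (v + h) * B (v - h)) - (v ^ 2 - h ^ 2 / 2 - α))
      =O[cobounded ℝ] fun v => (v ^ 2)⁻¹ := by
  have hpow := (hasUnitExpansion_sq_mul_mul_shift hB h).rpow tendsto_inv_sq_cobounded (-1 / 2)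
  refine ((isBigO_refl (fun v : ℝ => v ^ 2) _).mul hpow.remainder).congr' ?_ ?_ <;>
    filter_upwards [eventually_ne_cobounded 0] with v hv
  · rw [abs_div_sqrt_eq_sq_mul_rpow hv]
    field_simp
    ring
  · field_simp

end InverseSquareScale

theorem aps_expansion_offdiagonal_coefficient_general
    (k h α : ℝ) (A B : ℝ → ℝ)
    (hA : ∃ R > (0 : ℝ), ∀ v : ℝ, R ≤ |v| → A v = k * |v|)
    (hB : ∃ C₀ > (0 : ℝ), ∃ M₀ > (0 : ℝ), ∀ v : ℝ, M₀ ≤ |v| →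
      |(|v| * B v - 1 - α / v ^ 2)| ≤ C₀ / v ^ 4) :
    ∃ C > (0 : ℝ), ∃ M > (0 : ℝ), ∀ v : ℝ, M ≤ |v| →
      0 < B (v + h) * B (v - h) ∧
      |A v / √(B (v + h) * B (v - h)) - k * (v ^ 2 - h ^ 2 / 2 - α)| ≤ C / v ^ 2 := by
  have hexp := hasUnitExpansion_inv_sq_iff.2 ((isBigO_cobounded_inv_pow_iff (by decide)).2 hB)
  have hA' : ∀ᶠ v in cobounded ℝ, A v = k * |v| := eventually_cobounded_iff_norm.2 hA
  have hO : (fun v => A v / √(B (v + h) * B (v - h)) - k * (v ^ 2 - h ^ 2 / 2 - α))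
      =O[cobounded ℝ] fun v => (v ^ 2)⁻¹ :=
    ((isBigO_abs_div_sqrt_mul_shift_sub hexp h).const_mul_left k).congr'
      (hA'.mono fun v hv => by simp only [hv, mul_div_assoc, mul_sub]) .rfl
  obtain ⟨C, hC, M₁, -, hbound⟩ := (isBigO_cobounded_inv_pow_iff even_two).1 hO
  obtain ⟨M₂, hM₂, hpos⟩ := eventually_cobounded_iff_norm.1 (eventually_mul_shift_pos hexp h)
  exact ⟨C, hC, max M₁ M₂, lt_max_of_lt_right hM₂, fun v hv =>
    ⟨hpos v (le_of_max_le_right hv), hbound v (le_of_max_le_left hv)⟩⟩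

/-- asymptotic expansion Ã(v)/√(B̃(v+2)·B̃(v−2)) = (3πG/4)(v²−2−α) + O(1/v²). -/
theorem aps_expansion_offdiagonal_coefficient
    (G α : ℝ) (hG : 0 < G)
    (A B : ℝ → ℝ)
    (hA : ∃ R > (0 : ℝ), ∀ v : ℝ, R ≤ |v| → A v = 3 * Real.pi * G / 4 * |v|)
    (hB : ∃ C₀ > (0 : ℝ), ∃ M₀ > (0 : ℝ), ∀ v : ℝ, M₀ ≤ |v| →
      abs (|v| * B v - 1 - α / v ^ 2) ≤ C₀ / v ^ 4) :
    ∃ C > (0 : ℝ), ∃ M > (0 : ℝ), ∀ v : ℝ, M ≤ |v| →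
      0 < B (v + 2) * B (v - 2) ∧
      abs (A v / Real.sqrt (B (v + 2) * B (v - 2))
          - 3 * Real.pi * G / 4 * (v ^ 2 - 2 - α)) ≤ C / v ^ 2 := by
  simpa only [show (2 : ℝ) ^ 2 / 2 = 2 by norm_num] using
    aps_expansion_offdiagonal_coefficient_general (3 * Real.pi * G / 4) 2 α A B hA hB
end
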